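/- Let r > 0, let B_r(0) ⊂ ℝ² be the open disc of radius r centered at the origin, and let u_V(x) := x/|x| for x ≠ 0. Then u_V ∈ W^{1,1}(B_r(0);S¹), and the relaxed area satisfies 𝒜(u_V, B_r(0)) ≤ ∫_{B_r(0)} √(1 + 1/|x|²) dx + min{2πr, π}. -/

import Mathlib

open MeasureTheory Metric Filter Set
open scoped ENNReal NNReal Topology Classical

noncomputable section

abbrev R2 := EuclideanSpace ℝ (Fin 2)

/-- `Ω ⊂ ℝ²` has Lipschitz boundary: near every boundary point, after a rigid motion,
`Ω` coincides with the open region strictly above the graph of a Lipschitz function. -/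
def HasLipschitzBoundary (Ω : Set R2) : Prop :=
  ∀ p ∈ frontier Ω, ∃ r : ℝ, 0 < r ∧ ∃ (f : R2 ≃ᵢ R2) (γ : ℝ → ℝ) (L : ℝ≥0),
    LipschitzWith L γ ∧ ∀ x ∈ Metric.ball p r, (x ∈ Ω ↔ γ (f x 0) < f x 1)

/-- `G` is the weak (distributional) gradient of `u` on `Ω`:
`∫_Ω u_i ∂_j φ = -∫_Ω G_{ij} φ` for all test functions `φ ∈ C_c^∞(Ω)`. -/
def IsWeakGradient (Ω : Set R2) (u : R2 → R2) (G : R2 → Matrix (Fin 2) (Fin 2) ℝ) : Prop :=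
  ∀ φ : R2 → ℝ, ContDiff ℝ (⊤ : ℕ∞) φ → HasCompactSupport φ → tsupport φ ⊆ Ω →
    ∀ i j : Fin 2,
      (∫ x in Ω, u x i * fderiv ℝ φ x (EuclideanSpace.single j 1)) =
        - ∫ x in Ω, G x i j * φ x

/-- `u ∈ W^{1,1}(Ω;ℝ²)` with weak gradient `G`. -/
def MemW11 (Ω : Set R2) (u : R2 → R2) (G : R2 → Matrix (Fin 2) (Fin 2) ℝ) : Prop :=
  IntegrableOn u Ω ∧ (∀ i j : Fin 2, IntegrableOn (fun x => G x i j) Ω) ∧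
    IsWeakGradient Ω u G

/-- `|u| = 1` a.e. in `Ω`. -/
def SphereValued (Ω : Set R2) (u : R2 → R2) : Prop :=
  ∀ᵐ x ∂(volume.restrict Ω), ‖u x‖ = 1

/-- Frobenius norm of a `2×2` matrix. -/
def frob (M : Matrix (Fin 2) (Fin 2) ℝ) : ℝ :=
  Real.sqrt (∑ i, ∑ j, (M i j) ^ 2)

/-- Jacobian matrix of a map `v : ℝ² → ℝ²`. -/
def jacobianMatrix (v : R2 → R2) (x : R2) : Matrix (Fin 2) (Fin 2) ℝ :=
  Matrix.of fun i j => fderiv ℝ v x (EuclideanSpace.single j 1) i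

/-- Classical graph area `A(v,A) = ∫_A √(1 + |∇v|² + (Jv)²)` of a `C¹` map. -/
def classicalArea (A : Set R2) (v : R2 → R2) : ℝ≥0∞ :=
  ∫⁻ x in A, ENNReal.ofReal
    (Real.sqrt (1 + (∑ i, ∑ j, (jacobianMatrix v x i j) ^ 2) + (jacobianMatrix v x).det ^ 2))

/-- `L¹`-relaxed area functional `𝒜(u,A)`. -/
def relaxedArea (u : R2 → R2) (A : Set R2) : ℝ≥0∞ :=
  sInf { a : ℝ≥0∞ | ∃ v : ℕ → R2 → R2,
    (∀ k, ContDiffOn ℝ 1 (v k) A) ∧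
    (∀ k, IntegrableOn (fun x => v k x - u x) A) ∧
    Tendsto (fun k => ∫ x in A, ‖v k x - u x‖) atTop (nhds 0) ∧
    a = Filter.liminf (fun k => classicalArea A (v k)) atTop }

/-- `λ_u = (1/2)(u₁ ∇^⊥u₂ − u₂ ∇^⊥u₁)`, computed from the weak gradient `G`. -/
def lambdaVec (u : R2 → R2) (G : R2 → Matrix (Fin 2) (Fin 2) ℝ) (x : R2) : Fin 2 → ℝ :=
  ![ (1 / 2) * (-(u x 0) * G x 1 1 + u x 1 * G x 0 1),
     (1 / 2) * (u x 0 * G x 1 0 - u x 1 * G x 0 0) ]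

/-- Distributional Jacobian pairing `⟨Det(∇u), φ⟩ = ∫_Ω λ_u · ∇φ`. -/
def detPairing (Ω : Set R2) (u : R2 → R2) (G : R2 → Matrix (Fin 2) (Fin 2) ℝ)
    (φ : R2 → ℝ) : ℝ :=
  ∫ x in Ω, ∑ j, lambdaVec u G x j * fderiv ℝ φ x (EuclideanSpace.single j 1)

/-- `φ ∈ Lip₀(Ω)`: Lipschitz on `cl(Ω)` and vanishing on `∂Ω`. -/
def MemLip0 (Ω : Set R2) (φ : R2 → ℝ) : Prop :=
  (∃ L : ℝ≥0, LipschitzOnWith L φ (closure Ω)) ∧ ∀ p ∈ frontier Ω, φ p = 0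

/-- Admissible test functions for the flat norm: Lipschitz constant `≤ L` on `cl(Ω)`,
vanishing on `Z`, and bounded by `1` on `cl(Ω)`. -/
def FlatAdmissible (Ω Z : Set R2) (L : ℝ≥0) (φ : R2 → ℝ) : Prop :=
  LipschitzOnWith L φ (closure Ω) ∧ (∀ p ∈ Z, φ p = 0) ∧ ∀ p ∈ closure Ω, |φ p| ≤ 1

/-- Flat norm of a functional `F`, with vanishing condition on the set `Z`. -/
def flatNormOn (Ω Z : Set R2) (L : ℝ≥0) (F : (R2 → ℝ) → ℝ) : ℝ≥0∞ :=
  ⨆ φ ∈ {φ : R2 → ℝ | FlatAdmissible Ω Z L φ}, ENNReal.ofReal (F φ)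

/-- Flat norm of a functional `F` on `Lip₀(Ω)`; `L = 2` gives `‖·‖_{flat,α}` (α = 1/2),
`L = 1` gives `‖·‖_flat`. -/
def flatNorm (Ω : Set R2) (L : ℝ≥0) (F : (R2 → ℝ) → ℝ) : ℝ≥0∞ :=
  flatNormOn Ω (frontier Ω) L F

/-- `d̄_Ω(x,y) = min{|x−y|, dist(x,∂Ω) + dist(y,∂Ω)}`. -/
def dbar (Ω : Set R2) (x y : R2) : ℝ :=
  min (dist x y) (Metric.infDist x (frontier Ω) + Metric.infDist y (frontier Ω))

/-- Countably subadditive interior envelope `𝒜**(u,V)` (relative to `Ω`). -/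
def envA (u : R2 → R2) (Ω V : Set R2) : ℝ≥0∞ :=
  sInf { a : ℝ≥0∞ | ∃ A : ℕ → Set R2,
    (∀ k, IsOpen (A k) ∧ A k ⊆ Ω) ∧ V ⊆ ⋃ k, A k ∧ a = ∑' k, relaxedArea u (A k) }

/-- Property `(P_f)` for a finite family of pairs of points of `cl(Ω)`. -/
def SatisfiesPf (Ω : Set R2) {n : ℕ} (x y : Fin n → R2) : Prop :=
  (∀ k, (x k ∈ Ω ∧ y k ∈ frontier Ω ∧ dist (x k) (y k) = Metric.infDist (x k) (frontier Ω)) ∨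
        (y k ∈ Ω ∧ x k ∈ frontier Ω ∧ dist (x k) (y k) = Metric.infDist (y k) (frontier Ω))) ∧
  ∀ i j, x i ∈ Ω → y j ∈ Ω → x i ≠ y j

/-- The points of the family `x, y` lying in `Ω` are distinct and three by three
not collinear. -/
def InteriorPointsGeneric (Ω : Set R2) {n : ℕ} (x y : Fin n → R2) : Prop :=
  (∀ a b : Fin n ⊕ Fin n, Sum.elim x y a ∈ Ω → Sum.elim x y b ∈ Ω → a ≠ b →
    Sum.elim x y a ≠ Sum.elim x y b) ∧
  ∀ a b c : Fin n ⊕ Fin n, Sum.elim x y a ∈ Ω → Sum.elim x y b ∈ Ω → Sum.elim x y c ∈ Ω →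
    a ≠ b → a ≠ c → b ≠ c →
    ¬ Collinear ℝ ({Sum.elim x y a, Sum.elim x y b, Sum.elim x y c} : Set R2)

/-- `ι(w₁,w₂) = (w₁,−w₂)`. -/
def conjPt (w : R2) : R2 := (WithLp.equiv 2 (Fin 2 → ℝ)).symm ![w 0, -(w 1)]

/-- `u` is a (positive/negative) vortex around the points of the family lying in `Ω`:
the closed discs of radii `ρ` are contained in `Ω` and pairwise disjoint,
`u(z) = (z−x_i)/|z−x_i|` on `B_{ρ}(x_i)` and `u(z) = ι((z−y_j)/|z−y_j|)` on `B_{ρ}(y_j)`. -/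
def VortexAt (Ω : Set R2) (u : R2 → R2) {n : ℕ} (x y : Fin n → R2)
    (ρ : Fin n ⊕ Fin n → ℝ) : Prop :=
  (∀ a, Sum.elim x y a ∈ Ω → Metric.closedBall (Sum.elim x y a) (ρ a) ⊆ Ω) ∧
  (∀ a b, a ≠ b → Sum.elim x y a ∈ Ω → Sum.elim x y b ∈ Ω →
    Disjoint (Metric.closedBall (Sum.elim x y a) (ρ a))
      (Metric.closedBall (Sum.elim x y b) (ρ b))) ∧
  (∀ i, x i ∈ Ω → ∀ᵐ z ∂(volume.restrict (Metric.ball (x i) (ρ (Sum.inl i)))),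
    u z = ‖z - x i‖⁻¹ • (z - x i)) ∧
  (∀ i, y i ∈ Ω → ∀ᵐ z ∂(volume.restrict (Metric.ball (y i) (ρ (Sum.inr i)))),
    u z = conjPt (‖z - y i‖⁻¹ • (z - y i)))

/-- The energy `E(I_P, I_D, τ)` of a partition `{I_Dᶜ, I_D}` of `I` and an injection
`τ : I_D → I`. -/
def energy (Ω : Set R2) {n : ℕ} (x y : Fin n → R2) (ID : Finset (Fin n))
    (τ : Fin n → Fin n) : ℝ≥0∞ :=
  ((IDᶜ.filter fun k => x k ∈ Ω).card : ℝ≥0∞) +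
  (((Finset.univ \ ID.image τ).filter fun j => y j ∈ Ω).card : ℝ≥0∞) +
  2 * ∑ k ∈ ID, μH[1] (segment ℝ (y (τ k)) (x k) ∩ Ω)

/-!
The vortex map is approximated by smooth maps in two ways, and the cheaper one is used.
The maps `x / √(|x|² + ε²)` cover the unit disc once, so in the limit their graphs carry an
additional disc of area `π` over the origin. The maps `w² / |w|²` with
`w = √(|x|² + ε²) + x₀ + i x₁` are circle-valued, hence have zero Jacobian; having degree `0`, they
turn back by `2π` across the negative `x₀`-axis, and in the limit their graphs carry a cylindrical
wall of height `2π` over a segment of length `r`. The derivative producing this wall is, on each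
circle `|x| = ρ`, a Poisson kernel, so its mass `2πr` is exact for every `ε`.
-/

section SmoothedNorm

variable {E : Type*} [NormedAddCommGroup E]

/-- The smoothing `√(|x|² + ε²)` of the norm, equal to the norm itself for `ε = 0`. -/
def smoothedNorm (ε : ℝ) (x : E) : ℝ := √(‖x‖ ^ 2 + ε ^ 2)

lemma smoothedNorm_zero (x : E) : smoothedNorm 0 x = ‖x‖ := by
  simp [smoothedNorm]

lemma sq_smoothedNorm (ε : ℝ) (x : E) : smoothedNorm ε x ^ 2 = ‖x‖ ^ 2 + ε ^ 2 :=
  Real.sq_sqrt (by positivity)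

lemma smoothedNorm_nonneg (ε : ℝ) (x : E) : 0 ≤ smoothedNorm ε x :=
  Real.sqrt_nonneg _

lemma smoothedNorm_pos {ε : ℝ} (hε : ε ≠ 0) (x : E) : 0 < smoothedNorm ε x :=
  Real.sqrt_pos.2 (by positivity)

lemma norm_le_smoothedNorm (ε : ℝ) (x : E) : ‖x‖ ≤ smoothedNorm ε x :=
  Real.le_sqrt_of_sq_le (le_add_of_nonneg_right (sq_nonneg ε))

lemma inv_smoothedNorm_le (ε : ℝ) {x : E} (hx : x ≠ 0) : (smoothedNorm ε x)⁻¹ ≤ ‖x‖⁻¹ :=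
  inv_anti₀ (norm_pos_iff.2 hx) (norm_le_smoothedNorm ε x)

lemma sq_div_smoothedNorm_pow_three_le (ε : ℝ) {x : E} (hx : x ≠ 0) :
    ε ^ 2 / smoothedNorm ε x ^ 3 ≤ ‖x‖⁻¹ := by
  have hN : 0 < smoothedNorm ε x := (norm_pos_iff.2 hx).trans_le (norm_le_smoothedNorm ε x)
  have hε_le : ε ^ 2 ≤ smoothedNorm ε x ^ 2 := by
    rw [sq_smoothedNorm]
    exact le_add_of_nonneg_left (sq_nonneg _)
  calc ε ^ 2 / smoothedNorm ε x ^ 3 ≤ smoothedNorm ε x ^ 2 / smoothedNorm ε x ^ 3 := by gcongr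
    _ = (smoothedNorm ε x)⁻¹ := by field_simp
    _ ≤ ‖x‖⁻¹ := inv_smoothedNorm_le ε hx

lemma continuous_smoothedNorm (ε : ℝ) : Continuous (smoothedNorm ε : E → ℝ) := by
  unfold smoothedNorm
  fun_prop

lemma tendsto_smoothedNorm (x : E) : Tendsto (smoothedNorm · x) (𝓝 0) (𝓝 ‖x‖) := by
  have hcont : Continuous (smoothedNorm · x) := by
    unfold smoothedNorm
    fun_prop
  simpa only [smoothedNorm_zero] using hcont.tendsto 0

variable [InnerProductSpace ℝ E]

lemma contDiff_smoothedNorm {ε : ℝ} (hε : ε ≠ 0) {n : WithTop ℕ∞} :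
    ContDiff ℝ n (smoothedNorm ε : E → ℝ) :=
  ((contDiff_norm_sq ℝ).add contDiff_const).sqrt fun x => by positivity

lemma hasFDerivAt_smoothedNorm {ε : ℝ} (hε : ε ≠ 0) (x : E) :
    HasFDerivAt (smoothedNorm ε) ((smoothedNorm ε x)⁻¹ • innerSL ℝ x) x := by
  have hsq : HasFDerivAt (fun y : E => ‖y‖ ^ 2 + ε ^ 2) (2 • innerSL ℝ x) x :=
    (hasStrictFDerivAt_norm_sq x).hasFDerivAt.add_const _
  refine (hsq.sqrt (by positivity)).congr_fderiv ?_
  rw [← Nat.cast_smul_eq_nsmul ℝ, smul_smul]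
  congr 1
  change 1 / (2 * smoothedNorm ε x) * _ = _
  have := smoothedNorm_pos hε x
  push_cast
  field_simp

/-- The map `x ↦ x / √(|x|² + ε²)`, equal to the vortex map `x ↦ x / |x|` for `ε = 0`. -/
def smoothedVortex (ε : ℝ) (x : E) : E := (smoothedNorm ε x)⁻¹ • x

lemma norm_smoothedVortex_le (ε : ℝ) (x : E) : ‖smoothedVortex ε x‖ ≤ 1 := by
  rw [smoothedVortex, norm_smul, norm_inv, Real.norm_of_nonneg (smoothedNorm_nonneg ε x)]
  exact inv_mul_le_one_of_le₀ (norm_le_smoothedNorm ε x) (smoothedNorm_nonneg ε x)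

lemma contDiff_smoothedVortex {ε : ℝ} (hε : ε ≠ 0) {n : WithTop ℕ∞} :
    ContDiff ℝ n (smoothedVortex ε : E → E) :=
  ((contDiff_smoothedNorm hε).inv fun x => (smoothedNorm_pos hε x).ne').smul contDiff_id

lemma tendsto_smoothedVortex {x : E} (hx : x ≠ 0) :
    Tendsto (smoothedVortex · x) (𝓝 0) (𝓝 (‖x‖⁻¹ • x)) :=
  ((tendsto_smoothedNorm x).inv₀ (norm_ne_zero_iff.2 hx)).smul_const x

lemma hasFDerivAt_smoothedVortex {ε : ℝ} (hε : ε ≠ 0) (x : E) :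
    HasFDerivAt (smoothedVortex ε)
      ((smoothedNorm ε x)⁻¹ • ContinuousLinearMap.id ℝ E -
        ((smoothedNorm ε x ^ 3)⁻¹ • innerSL ℝ x).smulRight x) x := by
  have hN := (smoothedNorm_pos hε x).ne'
  refine (((hasDerivAt_inv hN).comp_hasFDerivAt x (hasFDerivAt_smoothedNorm hε x)).smul
    (hasFDerivAt_id x)).congr_fderiv ?_
  ext y
  simp only [Function.comp_apply, id_eq, add_apply, sub_apply, smul_apply,
    ContinuousLinearMap.smulRight_apply, smul_eq_mul]
  rw [sub_eq_add_neg, ← neg_smul]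
  congr 2
  field_simp

end SmoothedNorm

section InverseNorm

variable {E : Type*} [NormedAddCommGroup E] [NormedSpace ℝ E] [FiniteDimensional ℝ E]
  [MeasurableSpace E] [BorelSpace E]

lemma integrableOn_inv_norm_ball (μ : Measure E) [μ.IsAddHaarMeasure]
    (hE : 2 ≤ Module.finrank ℝ E) (r : ℝ) : IntegrableOn (fun x : E => ‖x‖⁻¹) (ball 0 r) μ := by
  have : Nontrivial E := Module.nontrivial_of_finrank_pos (R := ℝ) (by lia)
  rw [integrableOn_fun_norm_addHaar μ (f := fun y => y⁻¹)]
  have hpow : IntegrableOn (fun y : ℝ => y ^ (Module.finrank ℝ E - 2)) (Ioo 0 r) :=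
    ((continuous_pow _).continuousOn.integrableOn_Icc (a := 0) (b := r)).mono_set
      Ioo_subset_Icc_self
  refine hpow.congr_fun (fun y hy => ?_) measurableSet_Ioo
  have hy0 : y ≠ 0 := hy.1.ne'
  rw [smul_eq_mul, show Module.finrank ℝ E - 1 = Module.finrank ℝ E - 2 + 1 by lia, pow_succ,
    mul_inv_cancel_right₀ hy0]

end InverseNorm

lemma ae_apply_ne_zero {ι : Type*} [Fintype ι] (i : ι) :
    ∀ᵐ x : EuclideanSpace ℝ ι, x i ≠ 0 := by
  have hproper : (EuclideanSpace.proj i : EuclideanSpace ℝ ι →L[ℝ] ℝ).ker ≠ ⊤ := fun h => by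
    simpa using (h ▸ Submodule.mem_top :
      EuclideanSpace.single i (1 : ℝ) ∈ (EuclideanSpace.proj i : EuclideanSpace ℝ ι →L[ℝ] ℝ).ker)
  simpa [ae_iff] using! Measure.addHaar_submodule volume _ hproper

lemma finrank_R2 : Module.finrank ℝ R2 = 2 := by simp

lemma norm_sq_R2 (x : R2) : ‖x‖ ^ 2 = x 0 ^ 2 + x 1 ^ 2 := by
  simp [EuclideanSpace.norm_sq_eq]

section DominatedConvergence

variable {ι α F : Type*} {l : Filter ι} [l.IsCountablyGenerated] [MeasurableSpace α]
  {μ : Measure α} [NormedAddCommGroup F]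

lemma tendsto_integral_norm_sub_of_dominated [l.NeBot] {v : ι → α → F} {u : α → F} {g : α → ℝ}
    (hv_meas : ∀ᶠ n in l, AEStronglyMeasurable (v n) μ) (hg : Integrable g μ)
    (hv_le : ∀ᶠ n in l, ∀ᵐ x ∂μ, ‖v n x‖ ≤ g x)
    (hlim : ∀ᵐ x ∂μ, Tendsto (v · x) l (𝓝 (u x))) :
    (∀ᶠ n in l, Integrable (fun x => v n x - u x) μ) ∧
      Tendsto (fun n => ∫ x, ‖v n x - u x‖ ∂μ) l (𝓝 0) := by
  obtain ⟨s, hs_lim, hs⟩ :=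
    exists_seq_forall_of_frequently (hv_meas.and hv_le).frequently
  have hu_meas : AEStronglyMeasurable u μ := aestronglyMeasurable_of_tendsto_ae atTop
    (fun k => (hs k).1) (hlim.mono fun x hx => hx.comp hs_lim)
  have hu_le : ∀ᵐ x ∂μ, ‖u x‖ ≤ g x := by
    filter_upwards [hlim, ae_all_iff.2 fun k => (hs k).2] with x hx hle
    exact le_of_tendsto' (hx.comp hs_lim).norm hle
  have hu : Integrable u μ := hg.mono' hu_meas hu_le
  constructor
  · filter_upwards [hv_meas, hv_le] with n hn hle using (hg.mono' hn hle).sub hu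
  · have h0 := tendsto_integral_filter_of_dominated_convergence (f := fun _ => (0 : ℝ))
      (F := fun n x => ‖v n x - u x‖) (fun x => g x + g x)
      (hv_meas.mono fun n hn => (hn.sub hu_meas).norm) ?_ (hg.add hg) ?_
    · simpa only [integral_zero] using h0
    · filter_upwards [hv_le] with n hn
      filter_upwards [hn, hu_le] with x hvx hux
      rw [norm_norm]
      exact (norm_sub_le _ _).trans (add_le_add hvx hux)
    · filter_upwards [hlim] with x hx
      simpa only [sub_self, norm_zero] using (hx.sub_const (u x)).norm

lemma tendsto_integral_mul_of_dominated {f : ι → α → ℝ} {f₀ g φ : α → ℝ} {C : ℝ}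
    (hf_meas : ∀ᶠ n in l, AEStronglyMeasurable (f n) μ) (hg : Integrable g μ)
    (hf_le : ∀ᶠ n in l, ∀ᵐ x ∂μ, |f n x| ≤ g x)
    (hlim : ∀ᵐ x ∂μ, Tendsto (f · x) l (𝓝 (f₀ x)))
    (hφ_meas : AEStronglyMeasurable φ μ) (hφ_le : ∀ x, ‖φ x‖ ≤ C) :
    Tendsto (fun n => ∫ x, f n x * φ x ∂μ) l (𝓝 (∫ x, f₀ x * φ x ∂μ)) := by
  refine tendsto_integral_filter_of_dominated_convergence (fun x => g x * C)
    (hf_meas.mono fun n hn => hn.mul hφ_meas) ?_ (hg.mul_const C)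
    (hlim.mono fun x hx => hx.mul_const (φ x))
  filter_upwards [hf_le] with n hn
  filter_upwards [hn] with x hx
  rw [norm_mul]
  exact mul_le_mul hx (hφ_le x) (norm_nonneg _) ((abs_nonneg _).trans hx)

end DominatedConvergence

section WeakGradient

lemma jacobianMatrix_of_hasFDerivAt {v : R2 → R2} {v' : R2 →L[ℝ] R2} {x : R2}
    (h : HasFDerivAt v v' x) (i j : Fin 2) :
    jacobianMatrix v x i j = v' (EuclideanSpace.single j 1) i := by
  rw [jacobianMatrix, Matrix.of_apply, h.fderiv]

lemma isWeakGradient_jacobianMatrix {v : R2 → R2} (hv : ContDiff ℝ 1 v) (Ω : Set R2) :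
    IsWeakGradient Ω v (jacobianMatrix v) := by
  intro φ hφ hφ_supp hφΩ i j
  set e : R2 := EuclideanSpace.single j 1
  have hvi : ContDiff ℝ 1 (fun y => v y i) := contDiff_euclidean.1 hv i
  have hjac : ∀ x, jacobianMatrix v x i j = fderiv ℝ (fun y => v y i) x e := fun x => by
    have hproj := (EuclideanSpace.proj (𝕜 := ℝ) i : R2 →L[ℝ] ℝ).hasFDerivAt.comp x
      (hv.differentiable one_ne_zero x).hasFDerivAt
    exact (congrArg (· e) hproj.fderiv).symm
  have hcont_v' : Continuous (fun x => fderiv ℝ (fun y => v y i) x e) :=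
    (hvi.continuous_fderiv one_ne_zero).clm_apply continuous_const
  have hcont_φ' : Continuous (fun x => fderiv ℝ φ x e) :=
    (hφ.continuous_fderiv (by simp)).clm_apply continuous_const
  have hφ_zero : ∀ x ∉ Ω, φ x = 0 := fun x hx =>
    image_eq_zero_of_notMem_tsupport fun h => hx (hφΩ h)
  have hφ'_zero : ∀ x ∉ Ω, fderiv ℝ φ x e = 0 := fun x hx => by
    rw [image_eq_zero_of_notMem_tsupport fun h => hx (hφΩ (tsupport_fderiv_subset ℝ h)),
      zero_apply]
  rw [setIntegral_eq_integral_of_forall_compl_eq_zero fun x hx => by rw [hφ'_zero x hx, mul_zero],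
    setIntegral_eq_integral_of_forall_compl_eq_zero fun x hx => by rw [hφ_zero x hx, mul_zero]]
  simp only [hjac]
  exact integral_mul_fderiv_eq_neg_fderiv_mul_of_integrable
    ((hcont_v'.mul hφ.continuous).integrable_of_hasCompactSupport hφ_supp.mul_left)
    ((hvi.continuous.mul hcont_φ').integrable_of_hasCompactSupport
      (hφ_supp.fderiv_apply ℝ e).mul_left)
    ((hvi.continuous.mul hφ.continuous).integrable_of_hasCompactSupport hφ_supp.mul_left)
    (fun x _ => hvi.differentiable one_ne_zero x) (fun x _ => hφ.differentiable (by simp) x)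

variable {ι : Type*} {l : Filter ι} [l.IsCountablyGenerated] [l.NeBot] {Ω : Set R2}

lemma isWeakGradient_of_tendsto {v : ι → R2 → R2} {V : ι → R2 → Matrix (Fin 2) (Fin 2) ℝ}
    {u : R2 → R2} {G : R2 → Matrix (Fin 2) (Fin 2) ℝ} {g h : R2 → ℝ}
    (hV : ∀ᶠ n in l, IsWeakGradient Ω (v n) (V n))
    (hv_meas : ∀ᶠ n in l, AEStronglyMeasurable (v n) (volume.restrict Ω))
    (hg : IntegrableOn g Ω) (hv_le : ∀ᶠ n in l, ∀ᵐ x ∂volume.restrict Ω, ‖v n x‖ ≤ g x)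
    (hv_lim : ∀ᵐ x ∂volume.restrict Ω, Tendsto (v · x) l (𝓝 (u x)))
    (hV_meas : ∀ i j, ∀ᶠ n in l, AEStronglyMeasurable (V n · i j) (volume.restrict Ω))
    (hh : IntegrableOn h Ω)
    (hV_le : ∀ i j, ∀ᶠ n in l, ∀ᵐ x ∂volume.restrict Ω, |V n x i j| ≤ h x)
    (hV_lim : ∀ᵐ x ∂volume.restrict Ω, Tendsto (V · x) l (𝓝 (G x))) :
    IsWeakGradient Ω u G := by
  intro φ hφ hφ_supp hφΩ i j
  have hcont_φ' : Continuous (fun x => fderiv ℝ φ x (EuclideanSpace.single j 1)) :=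
    (hφ.continuous_fderiv (by simp)).clm_apply continuous_const
  obtain ⟨C, hC⟩ := hφ_supp.exists_bound_of_continuous hφ.continuous
  obtain ⟨C', hC'⟩ := (hφ_supp.fderiv_apply ℝ _).exists_bound_of_continuous hcont_φ'
  have hleft := tendsto_integral_mul_of_dominated (f := fun n x => v n x i)
    (f₀ := fun x => u x i)
    (hv_meas.mono fun n hn => (EuclideanSpace.proj i).continuous.comp_aestronglyMeasurable hn) hg
    (hv_le.mono fun n hn => hn.mono fun x hx => (PiLp.norm_apply_le (v n x) i).trans hx)
    (hv_lim.mono fun x hx => ((EuclideanSpace.proj i).continuous.tendsto _).comp hx)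
    hcont_φ'.aestronglyMeasurable hC'
  have hright := tendsto_integral_mul_of_dominated (hV_meas i j) hh (hV_le i j)
    (hV_lim.mono fun x hx => (hx.apply_nhds i).apply_nhds j)
    hφ.continuous.aestronglyMeasurable hC
  exact tendsto_nhds_unique
    (hleft.congr' (hV.mono fun n hn => hn φ hφ hφ_supp hφΩ i j)) hright.neg

end WeakGradient

section RelaxedArea

/-- The integrand `√(1 + |∇v|² + (Jv)²)` of `classicalArea`. -/
def graphAreaDensity (v : R2 → R2) (x : R2) : ℝ :=
  √(1 + (∑ i, ∑ j, (jacobianMatrix v x i j) ^ 2) + (jacobianMatrix v x).det ^ 2)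

lemma classicalArea_le_add {A : Set R2} {v : R2 → R2} {f p q : R2 → ℝ}
    (hp : Measurable p) (hq : Measurable q)
    (h : ∀ᵐ x ∂volume.restrict A, graphAreaDensity v x ≤ f x + p x + q x) :
    classicalArea A v ≤ (∫⁻ x in A, ENNReal.ofReal (f x)) + (∫⁻ x in A, ENNReal.ofReal (p x)) +
      ∫⁻ x in A, ENNReal.ofReal (q x) := by
  rw [← lintegral_add_right _ hp.ennreal_ofReal, ← lintegral_add_right _ hq.ennreal_ofReal]
  refine lintegral_mono_ae (h.mono fun x hx => (ENNReal.ofReal_le_ofReal hx).trans ?_)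
  exact ENNReal.ofReal_add_le.trans (add_le_add_left ENNReal.ofReal_add_le _)

variable {ι : Type*} {l : Filter ι} [l.IsCountablyGenerated] [l.NeBot] {A : Set R2}

lemma relaxedArea_le_of_tendsto {u : R2 → R2} {v : ι → R2 → R2} {a : ι → ℝ≥0∞} {b : ℝ≥0∞}
    (hv : ∀ᶠ n in l, ContDiffOn ℝ 1 (v n) A)
    (hv_int : ∀ᶠ n in l, IntegrableOn (fun x => v n x - u x) A)
    (hv_lim : Tendsto (fun n => ∫ x in A, ‖v n x - u x‖) l (𝓝 0))
    (hle : ∀ᶠ n in l, classicalArea A (v n) ≤ a n) (ha : Tendsto a l (𝓝 b)) :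
    relaxedArea u A ≤ b := by
  obtain ⟨s, hs_lim, hs⟩ := exists_seq_forall_of_frequently (hv.and (hv_int.and hle)).frequently
  calc relaxedArea u A ≤ liminf (fun k => classicalArea A (v (s k))) atTop :=
        sInf_le ⟨v ∘ s, fun k => (hs k).1, fun k => (hs k).2.1, hv_lim.comp hs_lim, rfl⟩
    _ ≤ liminf (a ∘ s) atTop :=
        liminf_le_liminf (Eventually.of_forall fun k => (hs k).2.2)
    _ = b := (ha.comp hs_lim).liminf_eq

/- The excess density over `f` is split as `p + q`: `p` may concentrate and contributes its mass
`c` in the limit, whereas `q` is dominated and disappears. -/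
lemma relaxedArea_le_lintegral_add {u : R2 → R2} {v : ι → R2 → R2} {f g h : R2 → ℝ}
    {p q : ι → R2 → ℝ} {c : ℝ≥0∞} (hA : MeasurableSet A)
    (hv : ∀ᶠ n in l, ContDiffOn ℝ 1 (v n) A) (hg : IntegrableOn g A)
    (hv_le : ∀ᶠ n in l, ∀ᵐ x ∂volume.restrict A, ‖v n x‖ ≤ g x)
    (hv_lim : ∀ᵐ x ∂volume.restrict A, Tendsto (v · x) l (𝓝 (u x)))
    (hdensity : ∀ᶠ n in l, ∀ᵐ x ∂volume.restrict A,
      graphAreaDensity (v n) x ≤ f x + p n x + q n x)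
    (hp_meas : ∀ n, Measurable (p n)) (hq_meas : ∀ n, Measurable (q n))
    (hp : ∀ᶠ n in l, ∫⁻ x in A, ENNReal.ofReal (p n x) ≤ c) (hh : IntegrableOn h A)
    (hq_le : ∀ᶠ n in l, ∀ᵐ x ∂volume.restrict A, q n x ≤ h x)
    (hq_lim : ∀ᵐ x ∂volume.restrict A, Tendsto (q · x) l (𝓝 0)) :
    relaxedArea u A ≤ (∫⁻ x in A, ENNReal.ofReal (f x)) + c := by
  obtain ⟨hsub_int, hsub_lim⟩ := tendsto_integral_norm_sub_of_dominated
    (hv.mono fun n hn => hn.continuousOn.aestronglyMeasurable hA) hg hv_le hv_lim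
  have hq_zero : Tendsto (fun n => ∫⁻ x in A, ENNReal.ofReal (q n x)) l (𝓝 0) := by
    rw [← lintegral_zero (μ := volume.restrict A)]
    refine tendsto_lintegral_filter_of_dominated_convergence (fun x => ENNReal.ofReal (h x))
      (Eventually.of_forall fun n => (hq_meas n).ennreal_ofReal)
      (hq_le.mono fun n hn => hn.mono fun x hx => ENNReal.ofReal_le_ofReal hx)
      hh.lintegral_lt_top.ne (hq_lim.mono fun x hx => ?_)
    simpa only [ENNReal.ofReal_zero] using ENNReal.tendsto_ofReal hx
  refine relaxedArea_le_of_tendsto hv hsub_int hsub_lim ?_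
    (by simpa only [add_zero] using hq_zero.const_add ((∫⁻ x in A, ENNReal.ofReal (f x)) + c))
  filter_upwards [hdensity, hp] with n hn hpn
  refine (classicalArea_le_add (hp_meas n) (hq_meas n) hn).trans ?_
  gcongr

lemma sqrt_one_add_sq_add_sq_add_sq_le (a : ℝ) {p q : ℝ} (hp : 0 ≤ p) (hq : 0 ≤ q) :
    √(1 + a ^ 2 + p ^ 2 + q ^ 2) ≤ √(1 + a ^ 2) + p + q := by
  have hs := Real.sqrt_nonneg (1 + a ^ 2)
  have hs_sq := Real.sq_sqrt (by positivity : 0 ≤ 1 + a ^ 2)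
  refine Real.sqrt_le_iff.2 ⟨by positivity, ?_⟩
  nlinarith [mul_nonneg hs hp, mul_nonneg hs hq, mul_nonneg hp hq]

end RelaxedArea

section Vortex

/-- The Jacobian matrix of `smoothedVortex ε` for `ε ≠ 0`, and for `ε = 0` the weak gradient of the
vortex map. -/
def smoothedVortexJacobian (ε : ℝ) (x : R2) : Matrix (Fin 2) (Fin 2) ℝ :=
  Matrix.of fun i j =>
    (smoothedNorm ε x)⁻¹ * (if i = j then 1 else 0) - (smoothedNorm ε x ^ 3)⁻¹ * (x i * x j)

lemma jacobianMatrix_smoothedVortex {ε : ℝ} (hε : ε ≠ 0) :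
    jacobianMatrix (smoothedVortex ε) = smoothedVortexJacobian ε := by
  ext x i j
  rw [jacobianMatrix_of_hasFDerivAt (hasFDerivAt_smoothedVortex hε x)]
  simp only [smoothedVortexJacobian, Matrix.of_apply, sub_apply, smul_apply,
    ContinuousLinearMap.smulRight_apply, ContinuousLinearMap.id_apply, innerSL_apply_apply,
    EuclideanSpace.inner_single_right, PiLp.sub_apply, PiLp.smul_apply, PiLp.single_apply,
    smul_eq_mul, one_mul, conj_trivial]
  ring

lemma measurable_smoothedVortexJacobian (ε : ℝ) (i j : Fin 2) :
    Measurable (smoothedVortexJacobian ε · i j) := by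
  have := (continuous_smoothedNorm (E := R2) ε).measurable
  simp only [smoothedVortexJacobian, Matrix.of_apply]
  fun_prop

lemma abs_smoothedVortexJacobian_le (ε : ℝ) (x : R2) (i j : Fin 2) :
    |smoothedVortexJacobian ε x i j| ≤ 2 * (smoothedNorm ε x)⁻¹ := by
  have hN := smoothedNorm_nonneg ε x
  have hdiag : |(smoothedNorm ε x)⁻¹ * (if i = j then 1 else 0)| ≤ (smoothedNorm ε x)⁻¹ := by
    rw [abs_mul, abs_of_nonneg (inv_nonneg.2 hN)]
    exact mul_le_of_le_one_right (inv_nonneg.2 hN) (by split_ifs <;> simp)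
  have hrank_one : |(smoothedNorm ε x ^ 3)⁻¹ * (x i * x j)| ≤ (smoothedNorm ε x)⁻¹ := by
    have hcoord : ∀ k, |x k| ≤ smoothedNorm ε x := fun k =>
      (PiLp.norm_apply_le x k).trans (norm_le_smoothedNorm ε x)
    calc |(smoothedNorm ε x ^ 3)⁻¹ * (x i * x j)|
        = (smoothedNorm ε x ^ 3)⁻¹ * (|x i| * |x j|) := by
          rw [abs_mul, abs_mul, abs_of_nonneg (by positivity)]
      _ ≤ (smoothedNorm ε x ^ 3)⁻¹ * (smoothedNorm ε x * smoothedNorm ε x) := by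
          gcongr <;> exact hcoord _
      _ = (smoothedNorm ε x)⁻¹ := by
          rcases eq_or_ne (smoothedNorm ε x) 0 with h0 | h0
          · simp [h0]
          · field_simp
  calc |smoothedVortexJacobian ε x i j|
      ≤ (smoothedNorm ε x)⁻¹ + (smoothedNorm ε x)⁻¹ :=
        (abs_sub _ _).trans (add_le_add hdiag hrank_one)
    _ = 2 * (smoothedNorm ε x)⁻¹ := (two_mul _).symm

lemma tendsto_smoothedVortexJacobian {x : R2} (hx : x ≠ 0) :
    Tendsto (smoothedVortexJacobian · x) (𝓝 0) (𝓝 (smoothedVortexJacobian 0 x)) := by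
  have hN := tendsto_smoothedNorm x
  have hx' := norm_ne_zero_iff.2 hx
  refine tendsto_pi_nhds.2 fun i => tendsto_pi_nhds.2 fun j => ?_
  simp only [smoothedVortexJacobian, Matrix.of_apply, smoothedNorm_zero]
  exact ((hN.inv₀ hx').mul_const _).sub (((hN.pow 3).inv₀ (pow_ne_zero 3 hx')).mul_const _)

lemma sphereValued_vortex (Ω : Set R2) : SphereValued Ω (fun x => ‖x‖⁻¹ • x) := by
  filter_upwards [ae_restrict_of_ae (Measure.ae_ne volume (0 : R2))] with x hx
  rw [norm_smul, norm_inv, norm_norm, inv_mul_cancel₀ (norm_ne_zero_iff.2 hx)]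

lemma isWeakGradient_vortex (r : ℝ) :
    IsWeakGradient (ball 0 r) (fun x : R2 => ‖x‖⁻¹ • x) (smoothedVortexJacobian 0) := by
  have hne : ∀ᵐ x ∂volume.restrict (ball (0 : R2) r), x ≠ 0 :=
    ae_restrict_of_ae (Measure.ae_ne volume 0)
  refine isWeakGradient_of_tendsto (l := 𝓝[≠] (0 : ℝ)) (v := smoothedVortex)
    (V := smoothedVortexJacobian) (g := fun _ => 1) (h := fun x => 2 * ‖x‖⁻¹)
    ?_ ?_ (integrableOn_const measure_ball_lt_top.ne) ?_ ?_ ?_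
    ((integrableOn_inv_norm_ball volume finrank_R2.ge r).const_mul 2) ?_ ?_
  · filter_upwards [self_mem_nhdsWithin] with ε hε
    rw [← jacobianMatrix_smoothedVortex hε]
    exact isWeakGradient_jacobianMatrix (contDiff_smoothedVortex hε) _
  · filter_upwards [self_mem_nhdsWithin] with ε hε
    exact (contDiff_smoothedVortex hε (n := 0)).continuous.aestronglyMeasurable
  · exact Eventually.of_forall fun ε => ae_of_all _ (norm_smoothedVortex_le ε)
  · exact hne.mono fun x hx => (tendsto_smoothedVortex hx).mono_left nhdsWithin_le_nhds
  · exact fun i j => Eventually.of_forall fun ε =>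
      (measurable_smoothedVortexJacobian ε i j).aestronglyMeasurable
  · refine fun i j => Eventually.of_forall fun ε => hne.mono fun x hx => ?_
    exact (abs_smoothedVortexJacobian_le ε x i j).trans
      (mul_le_mul_of_nonneg_left (inv_smoothedNorm_le ε hx) zero_le_two)
  · exact hne.mono fun x hx => (tendsto_smoothedVortexJacobian hx).mono_left nhdsWithin_le_nhds

lemma memW11_vortex (r : ℝ) :
    MemW11 (ball 0 r) (fun x : R2 => ‖x‖⁻¹ • x) (smoothedVortexJacobian 0) := by
  refine ⟨?_, fun i j => ?_, isWeakGradient_vortex r⟩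
  · refine Measure.integrableOn_of_bounded (M := 1) measure_ball_lt_top.ne (by fun_prop) ?_
    exact (sphereValued_vortex _).mono fun x hx => hx.le
  · refine ((integrableOn_inv_norm_ball volume finrank_R2.ge r).const_mul 2).mono'
      (measurable_smoothedVortexJacobian 0 i j).aestronglyMeasurable (ae_of_all _ fun x => ?_)
    simpa only [smoothedNorm_zero, Real.norm_eq_abs] using abs_smoothedVortexJacobian_le 0 x i j

end Vortex

section Disc

lemma graphAreaDensity_smoothedVortex {ε : ℝ} (hε : ε ≠ 0) (x : R2) :
    graphAreaDensity (smoothedVortex ε) x = √(1 + (smoothedNorm ε x)⁻¹ ^ 2 +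
      (ε ^ 2 / smoothedNorm ε x ^ 4) ^ 2 + (ε ^ 2 / smoothedNorm ε x ^ 3) ^ 2) := by
  have hN := (smoothedNorm_pos hε x).ne'
  have hε_sq : ε ^ 2 = smoothedNorm ε x ^ 2 - (x 0 ^ 2 + x 1 ^ 2) := by
    rw [sq_smoothedNorm, norm_sq_R2, add_sub_cancel_left]
  rw [graphAreaDensity, jacobianMatrix_smoothedVortex hε, hε_sq]
  congr 1
  simp only [smoothedVortexJacobian, Matrix.det_fin_two, Matrix.of_apply, Fin.sum_univ_two,
    zero_ne_one, one_ne_zero, if_true, if_false]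
  field_simp
  ring

lemma graphAreaDensity_smoothedVortex_le {ε : ℝ} (hε : ε ≠ 0) {x : R2} (hx : x ≠ 0) :
    graphAreaDensity (smoothedVortex ε) x ≤ √(1 + 1 / ‖x‖ ^ 2) +
      ε ^ 2 / smoothedNorm ε x ^ 4 + ε ^ 2 / smoothedNorm ε x ^ 3 := by
  have hN := smoothedNorm_pos hε x
  rw [graphAreaDensity_smoothedVortex hε]
  refine (sqrt_one_add_sq_add_sq_add_sq_le _ (by positivity) (by positivity)).trans ?_
  gcongr
  rw [one_div, ← inv_pow]
  gcongr
  exact norm_le_smoothedNorm ε x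

lemma lintegral_sq_div_smoothedNorm_pow_four {ε : ℝ} (hε : ε ≠ 0) :
    ∫⁻ x : R2, ENNReal.ofReal (ε ^ 2 / smoothedNorm ε x ^ 4) = ENNReal.ofReal Real.pi := by
  let f : ℝ → ℝ := fun y => ε ^ 2 / (y ^ 2 + ε ^ 2) ^ 2
  have hf : ∀ x : R2, ε ^ 2 / smoothedNorm ε x ^ 4 = f ‖x‖ := fun x => by
    rw [show smoothedNorm ε x ^ 4 = (smoothedNorm ε x ^ 2) ^ 2 by ring, sq_smoothedNorm]
  have hderiv : ∀ y ∈ Ici (0 : ℝ),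
      HasDerivAt (fun y => -ε ^ 2 / (2 * (y ^ 2 + ε ^ 2))) (y ^ (2 - 1) • f y) y := fun y _ => by
    have hden : 2 * (y ^ 2 + ε ^ 2) ≠ 0 := by positivity
    refine ((hasDerivAt_const y (-ε ^ 2)).div
      ((((hasDerivAt_id' y).pow 2).add_const (ε ^ 2)).const_mul 2) hden).congr_deriv ?_
    simp only [f, Pi.pow_apply, smul_eq_mul]
    field_simp
    ring
  have hnonneg : ∀ y ∈ Ioi (0 : ℝ), 0 ≤ y ^ (2 - 1) • f y := fun y hy => by
    have : 0 < y := hy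
    simp only [f, smul_eq_mul]
    positivity
  have hlim : Tendsto (fun y : ℝ => -ε ^ 2 / (2 * (y ^ 2 + ε ^ 2))) atTop (𝓝 0) :=
    ((tendsto_pow_atTop two_ne_zero).atTop_add tendsto_const_nhds |>.const_mul_atTop
      two_pos).const_div_atTop _
  have hf_int : Integrable fun x : R2 => f ‖x‖ := by
    rw [integrable_fun_norm_addHaar volume (f := f), finrank_R2]
    exact integrableOn_Ioi_deriv_of_nonneg' hderiv hnonneg hlim
  simp only [hf]
  rw [← ofReal_integral_eq_lintegral_ofReal hf_int (ae_of_all _ fun x => by positivity),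
    integral_fun_norm_addHaar volume f, finrank_R2,
    integral_Ioi_of_hasDerivAt_of_nonneg' hderiv hnonneg hlim, Measure.real,
    EuclideanSpace.volume_ball_fin_two]
  congr 1
  simp only [ENNReal.ofReal_one, one_pow, one_mul, ENNReal.toReal_ofReal Real.pi_nonneg,
    zero_pow two_ne_zero, zero_add, zero_sub, smul_eq_mul, nsmul_eq_mul, Nat.cast_ofNat]
  field_simp

lemma relaxedArea_vortex_le_add_pi (r : ℝ) :
    relaxedArea (fun x : R2 => ‖x‖⁻¹ • x) (ball 0 r) ≤
      (∫⁻ x in ball (0 : R2) r, ENNReal.ofReal √(1 + 1 / ‖x‖ ^ 2)) + ENNReal.ofReal Real.pi := by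
  have hne : ∀ᵐ x ∂volume.restrict (ball (0 : R2) r), x ≠ 0 :=
    ae_restrict_of_ae (Measure.ae_ne volume 0)
  have hmeas : ∀ ε, Measurable (smoothedNorm ε : R2 → ℝ) := fun ε =>
    (continuous_smoothedNorm ε).measurable
  refine relaxedArea_le_lintegral_add (l := 𝓝[≠] (0 : ℝ)) (v := smoothedVortex) (g := fun _ => 1)
    (h := fun x => ‖x‖⁻¹) (p := fun ε x => ε ^ 2 / smoothedNorm ε x ^ 4)
    (q := fun ε x => ε ^ 2 / smoothedNorm ε x ^ 3) measurableSet_ball ?_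
    (integrableOn_const measure_ball_lt_top.ne) ?_ ?_ ?_ (fun ε => by have := hmeas ε; fun_prop)
    (fun ε => by have := hmeas ε; fun_prop) ?_
    (integrableOn_inv_norm_ball volume finrank_R2.ge r) ?_ ?_
  · filter_upwards [self_mem_nhdsWithin] with ε hε using (contDiff_smoothedVortex hε).contDiffOn
  · exact Eventually.of_forall fun ε => ae_of_all _ (norm_smoothedVortex_le ε)
  · exact hne.mono fun x hx => (tendsto_smoothedVortex hx).mono_left nhdsWithin_le_nhds
  · filter_upwards [self_mem_nhdsWithin] with ε hε
    exact hne.mono fun x hx => graphAreaDensity_smoothedVortex_le hε hx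
  · filter_upwards [self_mem_nhdsWithin] with ε hε
    exact (setLIntegral_le_lintegral _ _).trans (lintegral_sq_div_smoothedNorm_pow_four hε).le
  · exact Eventually.of_forall fun ε => hne.mono fun x hx => sq_div_smoothedNorm_pow_three_le ε hx
  · refine hne.mono fun x hx => Tendsto.mono_left ?_ nhdsWithin_le_nhds
    have hlim := ((continuous_pow 2).tendsto (0 : ℝ)).div ((tendsto_smoothedNorm x).pow 3)
      (pow_ne_zero 3 (norm_ne_zero_iff.2 hx))
    simpa only [ne_eq, two_ne_zero, not_false_eq_true, zero_pow, zero_div] using! hlim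

end Disc

section PolarCoordinates

lemma norm_polar {ρ : ℝ} (hρ : 0 ≤ ρ) (θ : ℝ) :
    ‖(!₂[ρ * Real.cos θ, ρ * Real.sin θ] : R2)‖ = ρ := by
  rw [← sq_eq_sq₀ (norm_nonneg _) hρ, norm_sq_R2]
  simp only [Matrix.cons_val_zero, Matrix.cons_val_one]
  linear_combination ρ ^ 2 * Real.cos_sq_add_sin_sq θ

lemma lintegral_R2_eq_lintegral_polar {f : R2 → ℝ≥0∞} (hf : Measurable f) :
    ∫⁻ x, f x = ∫⁻ ρ in Ioi (0 : ℝ), ∫⁻ θ in Ioo (-Real.pi) Real.pi,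
      ENNReal.ofReal ρ * f !₂[ρ * Real.cos θ, ρ * Real.sin θ] := by
  have hpres : MeasurePreserving (fun z : ℝ × ℝ => (!₂[z.1, z.2] : R2)) volume volume :=
    (EuclideanSpace.volume_preserving_symm_measurableEquiv_toLp (Fin 2)).symm.comp
      (volume_preserving_finTwoArrow ℝ).symm
  have hpolar : Measurable fun z : ℝ × ℝ =>
      ENNReal.ofReal z.1 * f !₂[z.1 * Real.cos z.2, z.1 * Real.sin z.2] := by
    fun_prop
  rw [lintegral_lintegral hpolar.aemeasurable, Measure.prod_restrict, ← polarCoord_target,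
    ← hpres.lintegral_comp hf, ← lintegral_comp_polarCoord_symm]
  rfl

lemma lintegral_ball_eq_lintegral_polar {f : R2 → ℝ≥0∞} (hf : Measurable f) (r : ℝ) :
    ∫⁻ x in ball (0 : R2) r, f x = ∫⁻ ρ in Ioo 0 r, ∫⁻ θ in Ioo (-Real.pi) Real.pi,
      ENNReal.ofReal ρ * f !₂[ρ * Real.cos θ, ρ * Real.sin θ] := by
  rw [← lintegral_indicator measurableSet_ball,
    lintegral_R2_eq_lintegral_polar (hf.indicator measurableSet_ball),
    ← Ioi_inter_Iio (a := 0), inter_comm (Ioi 0), ← setLIntegral_indicator measurableSet_Iio]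
  refine setLIntegral_congr_fun measurableSet_Ioi fun ρ hρ => ?_
  by_cases hρr : ρ < r <;> simp [indicator, norm_polar (le_of_lt hρ), hρr]

lemma integral_poisson {R ρ : ℝ} (hρ : |ρ| < R) :
    ∫ θ in -Real.pi..Real.pi,
      (R ^ 2 - ρ ^ 2) / ((R + ρ * Real.cos θ) ^ 2 + (ρ * Real.sin θ) ^ 2) = 2 * Real.pi := by
  have hkernel : ∀ θ : ℝ, poissonKernel 0 (-ρ : ℂ) (circleMap 0 R θ) =
      (R ^ 2 - ρ ^ 2) / ((R + ρ * Real.cos θ) ^ 2 + (ρ * Real.sin θ) ^ 2) := fun θ => by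
    have hnorm_sq : ‖circleMap 0 R θ + ρ‖ ^ 2 =
        (R + ρ * Real.cos θ) ^ 2 + (ρ * Real.sin θ) ^ 2 := by
      rw [← Complex.normSq_eq_norm_sq, Complex.normSq_apply, Complex.add_re, Complex.add_im,
        circleMap_zero_re, circleMap_zero_im, Complex.ofReal_re, Complex.ofReal_im]
      linear_combination (R ^ 2 - ρ ^ 2) * Real.cos_sq_add_sin_sq θ
    rw [poissonKernel_def, sub_zero, sub_zero, sub_neg_eq_add, hnorm_sq, norm_circleMap_zero,
      norm_neg, Complex.norm_real, Real.norm_eq_abs, sq_abs, sq_abs]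
  have hmean := (diffContOnCl_const (c := (1 : ℂ))).circleAverage_poissonKernel_smul
    (c := 0) (w := (-ρ : ℂ)) (R := R) (by simpa using hρ)
  rw [Real.circleAverage_eq_integral_add (-Real.pi),
    intervalIntegral.integral_comp_add_right fun θ =>
      (poissonKernel 0 (-ρ : ℂ) • fun _ => (1 : ℂ)) (circleMap 0 R θ)] at hmean
  have hreal : ∀ θ, (poissonKernel 0 (-ρ : ℂ) • fun _ => (1 : ℂ)) (circleMap 0 R θ) =
      (((R ^ 2 - ρ ^ 2) / ((R + ρ * Real.cos θ) ^ 2 + (ρ * Real.sin θ) ^ 2) : ℝ) : ℂ) :=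
    fun θ => by rw [← hkernel, Pi.smul_apply', Complex.real_smul, mul_one]
  simp only [hreal] at hmean
  rw [intervalIntegral.integral_ofReal, zero_add, two_mul, add_neg_cancel_right, ← two_mul,
    Complex.real_smul, ← Complex.ofReal_mul, ← Complex.ofReal_one, Complex.ofReal_inj,
    inv_mul_eq_one₀ Real.two_pi_pos.ne'] at hmean
  exact hmean.symm

lemma lintegral_poisson {R ρ : ℝ} (hρ : |ρ| < R) :
    ∫⁻ θ in Ioo (-Real.pi) Real.pi, ENNReal.ofReal
      ((R ^ 2 - ρ ^ 2) / ((R + ρ * Real.cos θ) ^ 2 + (ρ * Real.sin θ) ^ 2)) =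
      ENNReal.ofReal (2 * Real.pi) := by
  have hsq : 0 ≤ R ^ 2 - ρ ^ 2 := sub_nonneg.2 (sq_le_sq.2 (hρ.le.trans (le_abs_self R)))
  have hmass := integral_poisson hρ
  rw [intervalIntegral.integral_of_le (by linarith [Real.pi_pos]),
    ← restrict_Ioo_eq_restrict_Ioc] at hmass
  rw [← hmass, ofReal_integral_eq_lintegral_ofReal]
  · exact .of_integral_ne_zero (hmass ▸ Real.two_pi_pos.ne')
  · exact ae_of_all _ fun θ => by positivity

end PolarCoordinates

section CircleValued

/-- The map `z ↦ z² / |z|²` in the coordinates `z = p + i q`. It has modulus one and doubles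
angles. -/
def normalizedSquare (p q : ℝ) : R2 := (p ^ 2 + q ^ 2)⁻¹ • !₂[p ^ 2 - q ^ 2, 2 * p * q]

lemma norm_normalizedSquare {p q : ℝ} (h : p ^ 2 + q ^ 2 ≠ 0) : ‖normalizedSquare p q‖ = 1 := by
  rw [← sq_eq_sq₀ (norm_nonneg _) zero_le_one, norm_sq_R2]
  simp only [normalizedSquare, PiLp.smul_apply, Matrix.cons_val_zero, Matrix.cons_val_one,
    smul_eq_mul]
  field_simp
  ring

lemma normalizedSquare_norm_add (x : R2) (hx : x 1 ≠ 0) :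
    normalizedSquare (‖x‖ + x 0) (x 1) = ‖x‖⁻¹ • x := by
  have hx_norm : ‖x‖ ≠ 0 := norm_ne_zero_iff.2 fun h => hx (by simp [h])
  have hx_sq : x 1 ^ 2 = ‖x‖ ^ 2 - x 0 ^ 2 := by rw [norm_sq_R2]; ring
  have hden : (‖x‖ + x 0) ^ 2 + x 1 ^ 2 ≠ 0 := by positivity
  ext i
  fin_cases i <;> simp only [normalizedSquare, PiLp.smul_apply, smul_eq_mul, Fin.zero_eta,
    Fin.mk_one, Matrix.cons_val_zero, Matrix.cons_val_one] <;> field_simp <;>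
    rw [hx_sq] <;> ring

lemma contDiff_normalizedSquare {E : Type*} [NormedAddCommGroup E] [NormedSpace ℝ E]
    {p q : E → ℝ} {n : WithTop ℕ∞} (hp : ContDiff ℝ n p) (hq : ContDiff ℝ n q)
    (h : ∀ x, p x ^ 2 + q x ^ 2 ≠ 0) : ContDiff ℝ n fun x => normalizedSquare (p x) (q x) := by
  refine (((hp.pow 2).add (hq.pow 2)).inv h).smul (contDiff_euclidean.2 fun i => ?_)
  fin_cases i
  · exact (hp.pow 2).sub (hq.pow 2)
  · exact (contDiff_const.mul hp).mul hq

lemma tendsto_normalizedSquare {ι : Type*} {l : Filter ι} {p q : ι → ℝ} {a b : ℝ}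
    (hp : Tendsto p l (𝓝 a)) (hq : Tendsto q l (𝓝 b)) (h : a ^ 2 + b ^ 2 ≠ 0) :
    Tendsto (fun n => normalizedSquare (p n) (q n)) l (𝓝 (normalizedSquare a b)) := by
  have hcont : ContinuousAt (fun z : ℝ × ℝ => normalizedSquare z.1 z.2) (a, b) := by
    unfold normalizedSquare
    fun_prop (disch := exact h)
  simpa only [Function.comp_def] using hcont.tendsto.comp (hp.prodMk_nhds hq)

/- The angle of `z² / |z|²` is twice that of `z`, so its derivative is `2 (p dq - q dp) / |z|²`
times the unit tangent. -/
lemma hasFDerivAt_normalizedSquare {E : Type*} [NormedAddCommGroup E] [NormedSpace ℝ E]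
    {p q : E → ℝ} {p' q' : E →L[ℝ] ℝ} {x : E} (hp : HasFDerivAt p p' x)
    (hq : HasFDerivAt q q' x) (h : p x ^ 2 + q x ^ 2 ≠ 0) :
    HasFDerivAt (fun y => normalizedSquare (p y) (q y))
      (((2 / (p x ^ 2 + q x ^ 2)) • (p x • q' - q x • p')).smulRight
        !₂[-normalizedSquare (p x) (q x) 1, normalizedSquare (p x) (q x) 0]) x := by
  have hinv := (hasDerivAt_inv h).comp_hasFDerivAt x ((hp.pow 2).add (hq.pow 2))
  refine hasFDerivWithinAt_univ.1 (hasFDerivWithinAt_euclidean.2 fun i =>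
    hasFDerivWithinAt_univ.2 ?_)
  fin_cases i
  · refine (hinv.mul ((hp.pow 2).sub (hq.pow 2))).congr_fderiv ?_
    ext y
    simp only [Function.comp_apply, Pi.add_apply, Pi.sub_apply, pow_one, add_apply,
      sub_apply, smul_apply, neg_apply, smul_eq_mul, nsmul_eq_mul, Nat.cast_ofNat, neg_smul,
      normalizedSquare, PiLp.smul_apply, PiLp.proj_apply, Matrix.cons_val_zero,
      Matrix.cons_val_one, ContinuousLinearMap.comp_apply, ContinuousLinearMap.smulRight_apply,
      map_smul, Fin.zero_eta, Nat.add_one_sub_one]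
    field_simp
    ring
  · refine (hinv.mul ((hp.const_mul 2).mul hq)).congr_fderiv ?_
    ext y
    simp only [Function.comp_apply, Pi.add_apply, Pi.mul_apply, pow_one, add_apply,
      sub_apply, smul_apply, neg_apply, smul_eq_mul, nsmul_eq_mul, Nat.cast_ofNat, neg_smul,
      normalizedSquare, PiLp.smul_apply, PiLp.proj_apply, Matrix.cons_val_zero,
      Matrix.cons_val_one, ContinuousLinearMap.comp_apply, ContinuousLinearMap.smulRight_apply,
      map_smul, Fin.mk_one, Nat.add_one_sub_one]
    field_simp
    ring

lemma graphAreaDensity_of_hasFDerivAt_smulRight {v : R2 → R2} {ω : R2 →L[ℝ] ℝ} {n x : R2}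
    (h : HasFDerivAt v (ω.smulRight n) x) (hn : ‖n‖ = 1) :
    graphAreaDensity v x =
      √(1 + (ω (EuclideanSpace.single 0 1) ^ 2 + ω (EuclideanSpace.single 1 1) ^ 2)) := by
  have hn_sq : n 0 ^ 2 + n 1 ^ 2 = 1 := by rw [← norm_sq_R2, hn, one_pow]
  rw [graphAreaDensity]
  simp only [jacobianMatrix_of_hasFDerivAt h, Matrix.det_fin_two, Fin.sum_univ_two,
    ContinuousLinearMap.smulRight_apply, PiLp.smul_apply, smul_eq_mul]
  congr 1
  linear_combination
    (ω (EuclideanSpace.single 0 1) ^ 2 + ω (EuclideanSpace.single 1 1) ^ 2) * hn_sq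

end CircleValued

section Slit

/-- The squared modulus of `√(|x|² + ε²) + x₀ + i x₁`. -/
def slitNormSq (ε : ℝ) (x : R2) : ℝ := (smoothedNorm ε x + x 0) ^ 2 + x 1 ^ 2

/-- The circle-valued smoothing of the vortex map which, as `ε → 0`, makes a full turn across a
thin neighbourhood of the half-line `{x₀ ≤ 0, x₁ = 0}`. -/
def slitVortex (ε : ℝ) (x : R2) : R2 := normalizedSquare (smoothedNorm ε x + x 0) (x 1)

lemma smoothedNorm_add_apply_zero_pos {ε : ℝ} (hε : ε ≠ 0) (x : R2) :
    0 < smoothedNorm ε x + x 0 := by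
  have hlt : |x 0| < smoothedNorm ε x := by
    refine abs_lt_of_sq_lt_sq ?_ (smoothedNorm_nonneg ε x)
    rw [sq_smoothedNorm, norm_sq_R2]
    have := sq_pos_of_ne_zero hε
    nlinarith
  linarith [neg_abs_le (x 0)]

lemma slitNormSq_pos {ε : ℝ} (hε : ε ≠ 0) (x : R2) : 0 < slitNormSq ε x :=
  add_pos_of_pos_of_nonneg (pow_pos (smoothedNorm_add_apply_zero_pos hε x) 2) (sq_nonneg _)

lemma slitNormSq_eq (ε : ℝ) (x : R2) :
    slitNormSq ε x = 2 * smoothedNorm ε x * (smoothedNorm ε x + x 0) - ε ^ 2 := by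
  rw [slitNormSq]
  linear_combination -sq_smoothedNorm ε x - norm_sq_R2 x

lemma measurable_slitNormSq (ε : ℝ) : Measurable (slitNormSq ε) := by
  have := (continuous_smoothedNorm (E := R2) ε).measurable
  unfold slitNormSq
  fun_prop

lemma tendsto_slitNormSq (x : R2) : Tendsto (slitNormSq · x) (𝓝 0) (𝓝 (slitNormSq 0 x)) := by
  simp only [slitNormSq, smoothedNorm_zero]
  exact (((tendsto_smoothedNorm x).add_const _).pow 2).add_const _

lemma contDiff_slitVortex {ε : ℝ} (hε : ε ≠ 0) {n : WithTop ℕ∞} : ContDiff ℝ n (slitVortex ε) :=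
  contDiff_normalizedSquare ((contDiff_smoothedNorm hε).add (contDiff_piLp_apply 2))
    (contDiff_piLp_apply 2) fun x => (slitNormSq_pos hε x).ne'

lemma norm_slitVortex {ε : ℝ} (hε : ε ≠ 0) (x : R2) : ‖slitVortex ε x‖ = 1 :=
  norm_normalizedSquare (slitNormSq_pos hε x).ne'

lemma tendsto_slitVortex {x : R2} (hx : x 1 ≠ 0) :
    Tendsto (slitVortex · x) (𝓝 0) (𝓝 (‖x‖⁻¹ • x)) := by
  have hden : (‖x‖ + x 0) ^ 2 + x 1 ^ 2 ≠ 0 := by positivity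
  rw [← normalizedSquare_norm_add x hx]
  exact tendsto_normalizedSquare ((tendsto_smoothedNorm x).add_const _) tendsto_const_nhds hden

/- The two squares on the right come from the components of the angular derivative along the
tangential and the radial direction at `x`. -/
lemma slitAngle_deriv_sq_add_sq {ε : ℝ} (hε : ε ≠ 0) {x : R2} (hx : x ≠ 0) :
    (2 / slitNormSq ε x * (x 1 * ((smoothedNorm ε x)⁻¹ * x 0 + 1))) ^ 2 +
        (2 / slitNormSq ε x * (smoothedNorm ε x + x 0 - x 1 * ((smoothedNorm ε x)⁻¹ * x 1))) ^ 2 =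
      (‖x‖⁻¹ - ε ^ 2 / (‖x‖ * slitNormSq ε x)) ^ 2 +
        (2 * |x 1| * ε ^ 2 / (smoothedNorm ε x * slitNormSq ε x * ‖x‖)) ^ 2 := by
  have hD := (slitNormSq_pos hε x).ne'
  have hN := (smoothedNorm_pos hε x).ne'
  have hx_norm := norm_ne_zero_iff.2 hx
  have hx_sq := norm_sq_R2 x
  have hN_sq := sq_smoothedNorm ε x
  have hD_eq := slitNormSq_eq ε x
  set D := slitNormSq ε x
  set N := smoothedNorm ε x
  set A := 2 / D * (x 1 * (N⁻¹ * x 0 + 1)) with hA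
  set B := 2 / D * (N + x 0 - x 1 * (N⁻¹ * x 1)) with hB
  have htan : x 1 * A + x 0 * B = 1 - ε ^ 2 / D := by
    rw [hA, hB]
    field_simp
    rw [hD_eq]
    linear_combination (-2 : ℝ) * N * hN_sq - 2 * N * hx_sq
  have hrad : -(x 0 * A) + x 1 * B = 2 * x 1 * ε ^ 2 / (N * D) := by
    rw [hA, hB]
    field_simp
    linear_combination x 1 * hN_sq + x 1 * hx_sq
  calc A ^ 2 + B ^ 2
      = ((x 1 * A + x 0 * B) ^ 2 + (-(x 0 * A) + x 1 * B) ^ 2) / ‖x‖ ^ 2 := by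
        rw [eq_div_iff (pow_ne_zero 2 hx_norm), hx_sq]
        ring
    _ = _ := by
        rw [htan, hrad, div_pow _ (N * D * ‖x‖), mul_pow _ (ε ^ 2), mul_pow 2, sq_abs]
        field_simp

lemma graphAreaDensity_slitVortex {ε : ℝ} (hε : ε ≠ 0) {x : R2} (hx : x ≠ 0) :
    graphAreaDensity (slitVortex ε) x = √(1 + ((‖x‖⁻¹ - ε ^ 2 / (‖x‖ * slitNormSq ε x)) ^ 2 +
      (2 * |x 1| * ε ^ 2 / (smoothedNorm ε x * slitNormSq ε x * ‖x‖)) ^ 2)) := by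
  have hderiv := hasFDerivAt_normalizedSquare
    ((hasFDerivAt_smoothedNorm hε x).add (PiLp.hasFDerivAt_apply 2 x 0))
    (PiLp.hasFDerivAt_apply 2 x 1) (slitNormSq_pos hε x).ne'
  have hunit : ‖(!₂[-slitVortex ε x 1, slitVortex ε x 0] : R2)‖ = 1 := by
    rw [← norm_slitVortex hε x, ← sq_eq_sq₀ (norm_nonneg _) (norm_nonneg _), norm_sq_R2,
      norm_sq_R2]
    simp only [Matrix.cons_val_zero, Matrix.cons_val_one]
    ring
  refine (graphAreaDensity_of_hasFDerivAt_smulRight hderiv hunit).trans ?_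
  rw [← slitAngle_deriv_sq_add_sq hε hx, slitNormSq]
  simp only [Pi.add_apply, add_apply, sub_apply, smul_apply, smul_eq_mul, PiLp.proj_apply,
    PiLp.single_apply, innerSL_apply_apply, EuclideanSpace.inner_single_right, conj_trivial,
    zero_ne_one, one_ne_zero, if_true, if_false]
  ring_nf

lemma graphAreaDensity_slitVortex_le {ε : ℝ} (hε : ε ≠ 0) {x : R2} (hx : x ≠ 0) :
    graphAreaDensity (slitVortex ε) x ≤ √(1 + 1 / ‖x‖ ^ 2) + ε ^ 2 / (‖x‖ * slitNormSq ε x) +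
      2 * |x 1| * ε ^ 2 / (smoothedNorm ε x * slitNormSq ε x * ‖x‖) := by
  have hD := slitNormSq_pos hε x
  have hN := smoothedNorm_pos hε x
  rw [graphAreaDensity_slitVortex hε hx, one_div, ← inv_pow]
  refine (Real.sqrt_le_sqrt ?_).trans
    (sqrt_one_add_sq_add_sq_add_sq_le ‖x‖⁻¹ (by positivity) (by positivity))
  have hcross : 0 ≤ ‖x‖⁻¹ * (ε ^ 2 / (‖x‖ * slitNormSq ε x)) := by positivity
  linarith [sub_sq ‖x‖⁻¹ (ε ^ 2 / (‖x‖ * slitNormSq ε x))]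

lemma two_mul_abs_mul_sq_div_le {ε : ℝ} (hε : ε ≠ 0) (x : R2) :
    2 * |x 1| * ε ^ 2 / (smoothedNorm ε x * slitNormSq ε x * ‖x‖) ≤ 2 * ‖x‖⁻¹ := by
  have hD := slitNormSq_pos hε x
  have hN := smoothedNorm_pos hε x
  have hamgm : 2 * |x 1| * (smoothedNorm ε x + x 0) ≤ slitNormSq ε x := by
    rw [slitNormSq, ← sq_abs (x 1)]
    linarith [two_mul_le_add_sq |x 1| (smoothedNorm ε x + x 0)]
  have hε_le : ε ^ 2 ≤ 2 * smoothedNorm ε x * (smoothedNorm ε x + x 0) := by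
    linarith [slitNormSq_eq ε x]
  have hmul : 2 * |x 1| * ε ^ 2 ≤ 2 * (smoothedNorm ε x * slitNormSq ε x) :=
    calc 2 * |x 1| * ε ^ 2
        ≤ 2 * |x 1| * (2 * smoothedNorm ε x * (smoothedNorm ε x + x 0)) := by gcongr
      _ = 2 * (smoothedNorm ε x * (2 * |x 1| * (smoothedNorm ε x + x 0))) := by ring
      _ ≤ 2 * (smoothedNorm ε x * slitNormSq ε x) := by gcongr
  rw [div_mul_eq_div_div, div_eq_mul_inv _ ‖x‖]
  gcongr
  exact (div_le_iff₀ (by positivity)).2 hmul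

lemma lintegral_sq_div_norm_mul_slitNormSq {ε : ℝ} (hε : ε ≠ 0) (r : ℝ) :
    ∫⁻ x in ball (0 : R2) r, ENNReal.ofReal (ε ^ 2 / (‖x‖ * slitNormSq ε x)) =
      ENNReal.ofReal (2 * Real.pi * r) := by
  have hmeas := measurable_slitNormSq ε
  have hcircle : ∀ ρ ∈ Ioo 0 r, ∫⁻ θ in Ioo (-Real.pi) Real.pi, ENNReal.ofReal ρ *
      ENNReal.ofReal (ε ^ 2 / (‖(!₂[ρ * Real.cos θ, ρ * Real.sin θ] : R2)‖ *
        slitNormSq ε !₂[ρ * Real.cos θ, ρ * Real.sin θ])) = ENNReal.ofReal (2 * Real.pi) := by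
    intro ρ hρ
    have hρ_lt : |ρ| < √(ρ ^ 2 + ε ^ 2) := by
      rw [← Real.sqrt_sq_eq_abs]
      exact Real.sqrt_lt_sqrt (sq_nonneg ρ) (lt_add_of_pos_right _ (by positivity))
    rw [← lintegral_poisson hρ_lt]
    refine lintegral_congr fun θ => ?_
    rw [← ENNReal.ofReal_mul hρ.1.le, slitNormSq, smoothedNorm, norm_polar hρ.1.le,
      Real.sq_sqrt (by positivity), add_sub_cancel_left, ← mul_div_assoc,
      mul_div_mul_left _ _ hρ.1.ne']
    rfl
  rw [lintegral_ball_eq_lintegral_polar (by fun_prop), setLIntegral_congr_fun measurableSet_Ioo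
    hcircle, setLIntegral_const, Real.volume_Ioo, sub_zero,
    ← ENNReal.ofReal_mul Real.two_pi_pos.le]

lemma tendsto_two_mul_abs_mul_sq_div {x : R2} (hx : x 1 ≠ 0) :
    Tendsto (fun ε => 2 * |x 1| * ε ^ 2 / (smoothedNorm ε x * slitNormSq ε x * ‖x‖)) (𝓝 0)
      (𝓝 0) := by
  have hx_norm : ‖x‖ ≠ 0 := norm_ne_zero_iff.2 fun h => hx (by simp [h])
  have hD : slitNormSq 0 x ≠ 0 := by
    unfold slitNormSq
    positivity
  have hnum : Tendsto (fun ε : ℝ => 2 * |x 1| * ε ^ 2) (𝓝 0) (𝓝 0) :=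
    Continuous.tendsto' (by fun_prop) _ _ (by simp)
  have hden := ((tendsto_smoothedNorm x).mul (tendsto_slitNormSq x)).mul_const ‖x‖
  simpa only [zero_div] using! hnum.div hden (mul_ne_zero (mul_ne_zero hx_norm hD) hx_norm)

lemma relaxedArea_vortex_le_add_two_pi_mul (r : ℝ) :
    relaxedArea (fun x : R2 => ‖x‖⁻¹ • x) (ball 0 r) ≤
      (∫⁻ x in ball (0 : R2) r, ENNReal.ofReal √(1 + 1 / ‖x‖ ^ 2)) +
        ENNReal.ofReal (2 * Real.pi * r) := by
  have hne : ∀ᵐ x ∂volume.restrict (ball (0 : R2) r), x ≠ 0 :=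
    ae_restrict_of_ae (Measure.ae_ne volume 0)
  have hoff : ∀ᵐ x ∂volume.restrict (ball (0 : R2) r), x 1 ≠ 0 :=
    ae_restrict_of_ae (ae_apply_ne_zero 1)
  have hN_meas : ∀ ε, Measurable (smoothedNorm ε : R2 → ℝ) := fun ε =>
    (continuous_smoothedNorm ε).measurable
  refine relaxedArea_le_lintegral_add (l := 𝓝[≠] (0 : ℝ)) (v := slitVortex) (g := fun _ => 1)
    (h := fun x => 2 * ‖x‖⁻¹) (p := fun ε x => ε ^ 2 / (‖x‖ * slitNormSq ε x))
    (q := fun ε x => 2 * |x 1| * ε ^ 2 / (smoothedNorm ε x * slitNormSq ε x * ‖x‖))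
    measurableSet_ball ?_ (integrableOn_const measure_ball_lt_top.ne) ?_ ?_ ?_
    (fun ε => by have := measurable_slitNormSq ε; fun_prop)
    (fun ε => by have := hN_meas ε; have := measurable_slitNormSq ε; fun_prop) ?_
    ((integrableOn_inv_norm_ball volume finrank_R2.ge r).const_mul 2) ?_ ?_
  · filter_upwards [self_mem_nhdsWithin] with ε hε using (contDiff_slitVortex hε).contDiffOn
  · filter_upwards [self_mem_nhdsWithin] with ε hε
    exact ae_of_all _ fun x => (norm_slitVortex hε x).le
  · exact hoff.mono fun x hx => (tendsto_slitVortex hx).mono_left nhdsWithin_le_nhds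
  · filter_upwards [self_mem_nhdsWithin] with ε hε
    exact hne.mono fun x hx => graphAreaDensity_slitVortex_le hε hx
  · filter_upwards [self_mem_nhdsWithin] with ε hε
    exact (lintegral_sq_div_norm_mul_slitNormSq hε r).le
  · filter_upwards [self_mem_nhdsWithin] with ε hε
    exact ae_of_all _ (two_mul_abs_mul_sq_div_le hε)
  · exact hoff.mono fun x hx => (tendsto_two_mul_abs_mul_sq_div hx).mono_left nhdsWithin_le_nhds

end Slit

lemma integrableOn_sqrt_one_add_inv_norm_sq (r : ℝ) :
    IntegrableOn (fun x : R2 => √(1 + 1 / ‖x‖ ^ 2)) (ball 0 r) := by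
  refine ((integrableOn_const (C := (1 : ℝ)) measure_ball_lt_top.ne).add
    (integrableOn_inv_norm_ball volume finrank_R2.ge r)).mono' ?_ (ae_of_all _ fun x => ?_)
  · exact Measurable.aestronglyMeasurable (by fun_prop)
  · have hx := inv_nonneg.2 (norm_nonneg x)
    rw [Real.norm_of_nonneg (Real.sqrt_nonneg _), one_div, ← inv_pow, Pi.add_apply]
    exact Real.sqrt_le_iff.2 ⟨by positivity, by linarith [add_sq 1 ‖x‖⁻¹]⟩

/-- The vortex map `u_V(x) = x/|x|` belongs to `W^{1,1}(B_r(0);S¹)` and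
`𝒜(u_V,B_r(0)) ≤ ∫_{B_r(0)} √(1+1/|x|²) dx + min{2πr, π}`. -/
theorem relaxedArea_vortex_le (r : ℝ) (hr : 0 < r) :
    (∃ G : R2 → Matrix (Fin 2) (Fin 2) ℝ,
        MemW11 (Metric.ball (0 : R2) r) (fun x => ‖x‖⁻¹ • x) G) ∧
    SphereValued (Metric.ball (0 : R2) r) (fun x => ‖x‖⁻¹ • x) ∧
    relaxedArea (fun x => ‖x‖⁻¹ • x) (Metric.ball (0 : R2) r) ≤
      ENNReal.ofReal (∫ x in Metric.ball (0 : R2) r, Real.sqrt (1 + 1 / ‖x‖ ^ 2)) +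
        ENNReal.ofReal (min (2 * Real.pi * r) Real.pi) := by
  refine ⟨⟨_, memW11_vortex r⟩, sphereValued_vortex _, ?_⟩
  rw [ofReal_integral_eq_lintegral_ofReal (integrableOn_sqrt_one_add_inv_norm_sq r)
    (ae_of_all _ fun x => Real.sqrt_nonneg _)]
  rcases min_choice (2 * Real.pi * r) Real.pi with hmin | hmin <;> rw [hmin]
  · exact relaxedArea_vortex_le_add_two_pi_mul r
  · exact relaxedArea_vortex_le_add_pi r
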